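/- arXiv:2206.09567 — 11 statements merged into one kernel-verified Lean document; each statement's English description precedes it below -/
import Mathlib

section
/- (Theorem 1: 2-WL has stronger link discriminating power than 1-WL.) (i) For every label set Σ, all labeled graphs G = (V,E,l) and G' = (V',E',l') over Σ, and all target links (p,q) in G and (p',q') in G': if (p,q) and (p',q') are 2-WL-indistinguishable, then they are 1-WL-indistinguishable. (ii) There exist unlabeled graphs G, G' and target links (p,q) in G and (p',q') in G' that are 1-WL-indistinguishable but not 2-WL-indistinguishable. -/
open scoped Classical

universe u v

/-- The common 1-WL color type over label set `σ`:
`C 0 = σ`, `C (t+1) = C t × Multiset (C t)`. -/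
def WL1Color (σ : Type u) : ℕ → Type u
  | 0 => σ
  | t + 1 => WL1Color σ t × Multiset (WL1Color σ t)

/-- The 1-WL coloring of a labeled graph `(G, l)`:
`c¹⁰(v) = l v`, `c¹ᵗ⁺¹(v) = (c¹ᵗ(v), {{c¹ᵗ(u) : u ∈ N(v)}})`. -/
noncomputable def wl1 {σ : Type u} {V : Type v} [Fintype V] (G : SimpleGraph V)
    (l : V → σ) : (t : ℕ) → V → WL1Color σ t
  | 0 => l
  | t + 1 => fun v => (wl1 G l t v, (G.neighborFinset v).val.map (wl1 G l t))

/-- The type of initial pair colors over label set `σ`. -/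
def PairColor0 (σ : Type u) : Type u := σ × σ × Bool × Bool

/-- Initial pair color `c⁰(p,q) = (l p, l q, 1_{(p,q)∈E}, 1_{p=q})`. -/
noncomputable def pairInit {σ : Type u} {V : Type v} (G : SimpleGraph V) (l : V → σ)
    (e : V × V) : PairColor0 σ :=
  (l e.1, l e.2, decide (G.Adj e.1 e.2), decide (e.1 = e.2))

/-- The common (plain/local) 2-WL pair color type over label set `σ`. -/
def WL2Color (σ : Type u) : ℕ → Type u
  | 0 => PairColor0 σ
  | t + 1 => WL2Color σ t × Multiset (WL2Color σ t) × Multiset (WL2Color σ t)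

/-- The plain 2-WL coloring:
`c₂ᵗ⁺¹(p,q) = (c₂ᵗ(p,q), {{c₂ᵗ(u,q) : u ∈ V}}, {{c₂ᵗ(p,v) : v ∈ V}})`. -/
noncomputable def wl2 {σ : Type u} {V : Type v} [Fintype V] (G : SimpleGraph V)
    (l : V → σ) : (t : ℕ) → V × V → WL2Color σ t
  | 0 => pairInit G l
  | t + 1 => fun e =>
      (wl2 G l t e,
        Finset.univ.val.map (fun u => wl2 G l t (u, e.2)),
        Finset.univ.val.map (fun v => wl2 G l t (e.1, v)))

/-- The local 2-WL (2-WL_L) coloring: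
`cₗᵗ⁺¹(p,q) = (cₗᵗ(p,q), {{cₗᵗ(u,q) : (u,q) ∈ E}}, {{cₗᵗ(p,v) : (p,v) ∈ E}})`. -/
noncomputable def wl2L {σ : Type u} {V : Type v} [Fintype V] (G : SimpleGraph V)
    (l : V → σ) : (t : ℕ) → V × V → WL2Color σ t
  | 0 => pairInit G l
  | t + 1 => fun e =>
      (wl2L G l t e,
        (Finset.univ.filter (fun u => G.Adj u e.2)).val.map (fun u => wl2L G l t (u, e.2)),
        (Finset.univ.filter (fun v => G.Adj e.1 v)).val.map (fun v => wl2L G l t (e.1, v)))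

/-- The common (plain/local) 2-FWL pair color type over label set `σ`. -/
def FWLColor (σ : Type u) : ℕ → Type u
  | 0 => PairColor0 σ
  | t + 1 => FWLColor σ t × Multiset (FWLColor σ t × FWLColor σ t)

/-- The 2-FWL coloring:
`c_Fᵗ⁺¹(p,q) = (c_Fᵗ(p,q), {{(c_Fᵗ(u,q), c_Fᵗ(p,u)) : u ∈ V}})`. -/
noncomputable def fwl2 {σ : Type u} {V : Type v} [Fintype V] (G : SimpleGraph V)
    (l : V → σ) : (t : ℕ) → V × V → FWLColor σ t
  | 0 => pairInit G l
  | t + 1 => fun e =>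
      (fwl2 G l t e,
        Finset.univ.val.map (fun u => (fwl2 G l t (u, e.2), fwl2 G l t (e.1, u))))

/-- The local 2-FWL (2-FWL_L) coloring:
`c_FLᵗ⁺¹(p,q) = (c_FLᵗ(p,q), {{(c_FLᵗ(u,q), c_FLᵗ(p,u)) : (u,q) ∈ E or (p,u) ∈ E}})`. -/
noncomputable def fwl2L {σ : Type u} {V : Type v} [Fintype V] (G : SimpleGraph V)
    (l : V → σ) : (t : ℕ) → V × V → FWLColor σ t
  | 0 => pairInit G l
  | t + 1 => fun e =>
      (fwl2L G l t e,
        (Finset.univ.filter (fun u => G.Adj u e.2 ∨ G.Adj e.1 u)).val.map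
          (fun u => (fwl2L G l t (u, e.2), fwl2L G l t (e.1, u))))

/-- A target link: an ordered pair of distinct, non-adjacent vertices. -/
def IsTargetLink {V : Type v} (G : SimpleGraph V) (e : V × V) : Prop :=
  e.1 ≠ e.2 ∧ ¬ G.Adj e.1 e.2

/-- `(p,q)` in `(G,l)` and `(p',q')` in `(G',l')` are 1-WL-indistinguishable. -/
noncomputable def WL1Indist {σ : Type u} {V V' : Type v} [Fintype V] [Fintype V']
    (G : SimpleGraph V) (l : V → σ) (G' : SimpleGraph V') (l' : V' → σ)
    (e : V × V) (e' : V' × V') : Prop :=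
  ∀ t : ℕ, wl1 G l t e.1 = wl1 G' l' t e'.1 ∧ wl1 G l t e.2 = wl1 G' l' t e'.2

/-- 2-WL-indistinguishability. -/
noncomputable def WL2Indist {σ : Type u} {V V' : Type v} [Fintype V] [Fintype V']
    (G : SimpleGraph V) (l : V → σ) (G' : SimpleGraph V') (l' : V' → σ)
    (e : V × V) (e' : V' × V') : Prop :=
  ∀ t : ℕ, wl2 G l t e = wl2 G' l' t e'

/-- Local 2-WL (2-WL_L) indistinguishability. -/
noncomputable def WL2LIndist {σ : Type u} {V V' : Type v} [Fintype V] [Fintype V']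
    (G : SimpleGraph V) (l : V → σ) (G' : SimpleGraph V') (l' : V' → σ)
    (e : V × V) (e' : V' × V') : Prop :=
  ∀ t : ℕ, wl2L G l t e = wl2L G' l' t e'

/-- 2-FWL-indistinguishability. -/
noncomputable def FWL2Indist {σ : Type u} {V V' : Type v} [Fintype V] [Fintype V']
    (G : SimpleGraph V) (l : V → σ) (G' : SimpleGraph V') (l' : V' → σ)
    (e : V × V) (e' : V' × V') : Prop :=
  ∀ t : ℕ, fwl2 G l t e = fwl2 G' l' t e'

/-- Local 2-FWL (2-FWL_L) indistinguishability. -/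
noncomputable def FWL2LIndist {σ : Type u} {V V' : Type v} [Fintype V] [Fintype V']
    (G : SimpleGraph V) (l : V → σ) (G' : SimpleGraph V') (l' : V' → σ)
    (e : V × V) (e' : V' × V') : Prop :=
  ∀ t : ℕ, fwl2L G l t e = fwl2L G' l' t e'

/-- The 0/1 labeling trick: augment the labeling with indicator of membership in `{p, q}`. -/
noncomputable def label01 {σ : Type u} {V : Type v} (l : V → σ) (e : V × V) :
    V → σ × Bool :=
  fun v => (l v, decide (v = e.1 ∨ v = e.2))

/-- 1-WL-with-0/1-labeling indistinguishability of target links. -/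
noncomputable def WL1LabelIndist {σ : Type u} {V V' : Type v} [Fintype V] [Fintype V']
    (G : SimpleGraph V) (l : V → σ) (G' : SimpleGraph V') (l' : V' → σ)
    (e : V × V) (e' : V' × V') : Prop :=
  WL1Indist G (label01 l e) G' (label01 l' e') e e'

/-- The number of common neighbors of `p` and `q` in `G`. -/
noncomputable def commonNbrCount {V : Type v} [Fintype V] (G : SimpleGraph V)
    (e : V × V) : ℕ :=
  (G.neighborFinset e.1 ∩ G.neighborFinset e.2).card

/-- The edge indicator of a pair, as recorded in its 2-WL color. -/
def WL2Color.isEdge {σ : Type u} : (t : ℕ) → WL2Color σ t → Bool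
  | 0, c => c.2.2.1
  | t + 1, c => WL2Color.isEdge t c.1

/-- The 1-WL colors of the two endpoints of a pair, as recorded in its 2-WL color. -/
noncomputable def WL2Color.endpoints {σ : Type u} :
    (t : ℕ) → WL2Color σ t → WL1Color σ t × WL1Color σ t
  | 0, c => (c.1, c.2.1)
  | t + 1, c =>
      (((endpoints t c.1).1,
          (c.2.2.filter fun d => isEdge t d = true).map fun d => (endpoints t d).2),
        ((endpoints t c.1).2,
          (c.2.1.filter fun d => isEdge t d = true).map fun d => (endpoints t d).1))

theorem isEdge_wl2 {σ : Type u} {V : Type v} [Fintype V] (G : SimpleGraph V) (l : V → σ)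
    (t : ℕ) (e : V × V) : (wl2 G l t e).isEdge t = true ↔ G.Adj e.1 e.2 := by
  induction t with
  | zero => simp [WL2Color.isEdge, wl2, pairInit]
  | succ t ih => exact ih

theorem endpoints_wl2 {σ : Type u} {V : Type v} [Fintype V] (G : SimpleGraph V) (l : V → σ)
    (t : ℕ) (e : V × V) :
    (wl2 G l t e).endpoints t = (wl1 G l t e.1, wl1 G l t e.2) := by
  induction t generalizing e with
  | zero => rfl
  | succ t ih =>
    have hN (x : V) : G.neighborFinset x = Finset.univ.filter fun y => G.Adj x y := by
      ext y; simp
    simp only [WL2Color.endpoints, wl2, wl1, ih, Multiset.filter_map, Multiset.map_map,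
      Function.comp_def, isEdge_wl2, hN, Finset.filter_val, G.adj_comm _ e.2]

theorem WL2Indist.wl1Indist {σ : Type u} {V V' : Type v} [Fintype V] [Fintype V']
    {G : SimpleGraph V} {l : V → σ} {G' : SimpleGraph V'} {l' : V' → σ}
    {e : V × V} {e' : V' × V'} (h : WL2Indist G l G' l' e e') :
    WL1Indist G l G' l' e e' := by
  intro t
  have ht := congrArg (WL2Color.endpoints t) (h t)
  rw [endpoints_wl2, endpoints_wl2] at ht
  exact Prod.mk.inj ht

/-- Any two isolated vertices with the same constant label have the same 1-WL color. -/
theorem wl1_bot_const {σ : Type u} {V V' : Type v} [Fintype V] [Fintype V'] (a : σ)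
    (t : ℕ) (x : V) (x' : V') :
    wl1 (⊥ : SimpleGraph V) (fun _ => a) t x = wl1 (⊥ : SimpleGraph V') (fun _ => a) t x' := by
  induction t with
  | zero => rfl
  | succ t ih =>
    have hN {W : Type v} (y : W) [Fintype ((⊥ : SimpleGraph W).neighborSet y)] :
        (⊥ : SimpleGraph W).neighborFinset y = ∅ := by
      ext z; simp
    simp only [wl1, ih, hN, Finset.empty_val, Multiset.map_zero]
    rfl

/-- Pairs in graphs of different orders are distinguished by 2-WL. -/
theorem WL2Indist.card_eq {σ : Type u} {V V' : Type v} [Fintype V] [Fintype V']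
    {G : SimpleGraph V} {l : V → σ} {G' : SimpleGraph V'} {l' : V' → σ}
    {e : V × V} {e' : V' × V'} (h : WL2Indist G l G' l' e e') :
    Fintype.card V = Fintype.card V' := by
  have hc := congrArg (fun c : WL2Color σ 1 => Multiset.card c.2.1) (h 1)
  exact (Multiset.card_map _ _).symm.trans (hc.trans (Multiset.card_map _ _))

/-- Theorem 1: 2-WL has stronger link discriminating power than 1-WL. -/
theorem wl2_stronger_than_wl1 :
    (∀ (σ : Type u) (V V' : Type v) [Fintype V] [Fintype V']
        (G : SimpleGraph V) (l : V → σ) (G' : SimpleGraph V') (l' : V' → σ)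
        (e : V × V) (e' : V' × V'),
        IsTargetLink G e → IsTargetLink G' e' →
        WL2Indist G l G' l' e e' → WL1Indist G l G' l' e e') ∧
    (∃ (n n' : ℕ) (G : SimpleGraph (Fin n)) (G' : SimpleGraph (Fin n'))
        (e : Fin n × Fin n) (e' : Fin n' × Fin n'),
        IsTargetLink G e ∧ IsTargetLink G' e' ∧
        WL1Indist G (fun _ => ()) G' (fun _ => ()) e e' ∧
        ¬ WL2Indist G (fun _ => ()) G' (fun _ => ()) e e') := by
  refine ⟨fun σ V V' _ _ G l G' l' e e' _ _ h => h.wl1Indist,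
    2, 3, ⊥, ⊥, (0, 1), (0, 1), by simp [IsTargetLink], by simp [IsTargetLink],
    fun t => ⟨wl1_bot_const _ t _ _, wl1_bot_const _ t _ _⟩, fun h => ?_⟩
  simpa using h.card_eq
end

section
/- (Theorem 2: 2-FWL has stronger link discriminating power than 2-WL.) (i) For every label set Σ, all labeled graphs G = (V,E,l) and G' = (V',E',l') over Σ, and all target links (p,q) in G and (p',q') in G': if (p,q) and (p',q') are 2-FWL-indistinguishable, then they are 2-WL-indistinguishable. (ii) There exist unlabeled graphs G, G' and target links (p,q) in G and (p',q') in G' that are 2-WL-indistinguishable but not 2-FWL-indistinguishable. -/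
open scoped Classical

universe u v

/-- Equality of multiset images passes from a pair of colorings to any pair that they refine. -/
theorem Multiset.map_eq_map_of_refines {α β γ δ : Type*} {s : Multiset α} {s' : Multiset β}
    {f : α → γ} {f' : β → γ} {g : α → δ} {g' : β → δ}
    (h : s.map f = s'.map f') (hfg : ∀ a b, f a = f' b → g a = g' b) :
    s.map g = s'.map g' := by
  rw [← Multiset.rel_eq, Multiset.rel_map] at h ⊢
  exact h.mono fun a _ b _ hab => hfg a b hab

/-- At each iteration, the 2-FWL coloring refines the 2-WL coloring. -/
theorem wl2_eq_of_fwl2_eq {σ : Type u} {V V' : Type v} [Fintype V] [Fintype V']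
    (G : SimpleGraph V) (l : V → σ) (G' : SimpleGraph V') (l' : V' → σ) (t : ℕ) :
    ∀ (e : V × V) (e' : V' × V'), fwl2 G l t e = fwl2 G' l' t e' →
      wl2 G l t e = wl2 G' l' t e' := by
  induction t with
  | zero => exact fun _ _ h => h
  | succ t ih =>
    intro e e' h
    obtain ⟨hc, hm⟩ := Prod.ext_iff.mp h
    refine Prod.ext (ih e e' hc) (Prod.ext ?_ ?_)
    · exact Multiset.map_eq_map_of_refines hm fun u u' hu => ih _ _ (Prod.ext_iff.mp hu).1
    · exact Multiset.map_eq_map_of_refines hm fun u u' hu => ih _ _ (Prod.ext_iff.mp hu).2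

/-- Images of finite types under colorings that correspond along a bijection agree. -/
theorem Multiset.map_univ_eq_of_equiv {α β γ : Type*} [Fintype α] [Fintype β] {f : α → γ}
    {g : β → γ} (φ : α ≃ β) (h : ∀ a, f a = g (φ a)) :
    (Finset.univ : Finset α).val.map f = (Finset.univ : Finset β).val.map g := by
  rw [← Multiset.map_univ_val_equiv φ, Multiset.map_map]
  exact Multiset.map_congr rfl fun a _ => h a

/-- Initial pair colors agree iff all of their components do. -/
theorem pairInit_eq_iff {σ : Type u} {V V' : Type v} {G : SimpleGraph V} {l : V → σ}
    {G' : SimpleGraph V'} {l' : V' → σ} {e : V × V} {e' : V' × V'} :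
    pairInit G l e = pairInit G' l' e' ↔ l e.1 = l' e'.1 ∧ l e.2 = l' e'.2 ∧
      (G.Adj e.1 e.2 ↔ G'.Adj e'.1 e'.2) ∧ (e.1 = e.2 ↔ e'.1 = e'.2) := by
  unfold pairInit PairColor0
  simp only [Prod.mk.injEq, decide_eq_decide]

/-- The initial color of a pair in an unlabeled graph is invariant under automorphisms. -/
theorem pairInit_iso {V : Type v} {G : SimpleGraph V} (φ : G ≃g G) (a b : V) :
    pairInit G (fun _ => ()) (a, b) = pairInit G (fun _ => ()) (φ a, φ b) := by
  simp [pairInit_eq_iff, φ.map_adj_iff]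

/-- On an unlabeled vertex-transitive graph, 2-WL never refines the initial coloring. -/
theorem wl2_eq_of_pairInit_eq {V : Type v} [Fintype V] {G : SimpleGraph V}
    (hG : ∀ a b : V, ∃ φ : G ≃g G, φ a = b) (t : ℕ) :
    ∀ e e' : V × V, pairInit G (fun _ => ()) e = pairInit G (fun _ => ()) e' →
      wl2 G (fun _ => ()) t e = wl2 G (fun _ => ()) t e' := by
  induction t with
  | zero => exact fun _ _ h => h
  | succ t ih =>
    intro e e' h
    refine Prod.ext (ih e e' h) (Prod.ext ?_ ?_)
    · obtain ⟨φ, hφ⟩ := hG e.2 e'.2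
      refine Multiset.map_univ_eq_of_equiv φ.toEquiv fun u => ih _ _ ?_
      rw [← hφ]
      exact pairInit_iso φ u e.2
    · obtain ⟨φ, hφ⟩ := hG e.1 e'.1
      refine Multiset.map_univ_eq_of_equiv φ.toEquiv fun u => ih _ _ ?_
      rw [← hφ]
      exact pairInit_iso φ e.1 u

/-- Cycle graphs are vertex-transitive. -/
theorem cycleGraph_exists_iso (n : ℕ) (a b : Fin (n + 1)) :
    ∃ φ : SimpleGraph.cycleGraph (n + 1) ≃g SimpleGraph.cycleGraph (n + 1), φ a = b := by
  refine ⟨⟨Equiv.addRight (b - a), ?_⟩, ?_⟩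
  · intro x y
    cases n <;> simp [SimpleGraph.cycleGraph]
  · simp

/-- If two pairs share their 2-FWL color after one more iteration, every intermediate vertex of the
first is matched by an intermediate vertex of the second. -/
theorem exists_of_fwl2_succ_eq {σ : Type u} {V V' : Type v} [Fintype V] [Fintype V']
    {G : SimpleGraph V} {l : V → σ} {G' : SimpleGraph V'} {l' : V' → σ} {t : ℕ}
    {e : V × V} {e' : V' × V'} (h : fwl2 G l (t + 1) e = fwl2 G' l' (t + 1) e') (u : V) :
    ∃ u' : V', fwl2 G l t (u, e.2) = fwl2 G' l' t (u', e'.2) ∧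
      fwl2 G l t (e.1, u) = fwl2 G' l' t (e'.1, u') := by
  have hm : Finset.univ.val.map (fun u => (fwl2 G l t (u, e.2), fwl2 G l t (e.1, u))) =
      Finset.univ.val.map (fun u => (fwl2 G' l' t (u, e'.2), fwl2 G' l' t (e'.1, u))) :=
    (Prod.ext_iff.mp h).2
  have hu := Multiset.mem_map_of_mem (fun u => (fwl2 G l t (u, e.2), fwl2 G l t (e.1, u)))
    (Finset.mem_univ_val u)
  rw [hm] at hu
  obtain ⟨u', -, hu'⟩ := Multiset.mem_map.mp hu
  obtain ⟨h₁, h₂⟩ := Prod.ext_iff.mp hu'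
  exact ⟨u', h₁.symm, h₂.symm⟩

/-- Theorem 2: 2-FWL has stronger link discriminating power than 2-WL. -/
theorem fwl2_stronger_than_wl2 :
    (∀ (σ : Type u) (V V' : Type v) [Fintype V] [Fintype V']
        (G : SimpleGraph V) (l : V → σ) (G' : SimpleGraph V') (l' : V' → σ)
        (e : V × V) (e' : V' × V'),
        IsTargetLink G e → IsTargetLink G' e' →
        FWL2Indist G l G' l' e e' → WL2Indist G l G' l' e e') ∧
    (∃ (n n' : ℕ) (G : SimpleGraph (Fin n)) (G' : SimpleGraph (Fin n'))
        (e : Fin n × Fin n) (e' : Fin n' × Fin n'),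
        IsTargetLink G e ∧ IsTargetLink G' e' ∧
        WL2Indist G (fun _ => ()) G' (fun _ => ()) e e' ∧
        ¬ FWL2Indist G (fun _ => ()) G' (fun _ => ()) e e') := by
  refine ⟨fun σ V V' _ _ G l G' l' e e' _ _ h t => wl2_eq_of_fwl2_eq G l G' l' t e e' (h t), ?_⟩
  have h02 : ¬ (SimpleGraph.cycleGraph 6).Adj 0 2 := by decide
  have h03 : ¬ (SimpleGraph.cycleGraph 6).Adj 0 3 := by decide
  refine ⟨6, 6, SimpleGraph.cycleGraph 6, SimpleGraph.cycleGraph 6, (0, 2), (0, 3),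
    ⟨by decide, h02⟩, ⟨by decide, h03⟩, fun t => ?_, fun h => ?_⟩
  · apply wl2_eq_of_pairInit_eq (cycleGraph_exists_iso 5)
    simp [pairInit_eq_iff, h02, h03]
  · -- The vertex `1` is a common neighbor of `0` and `2`, while `0` and `3` have none.
    obtain ⟨u, hu3, hu0⟩ := exists_of_fwl2_succ_eq (h 1) 1
    have h12 : (SimpleGraph.cycleGraph 6).Adj 1 2 := by decide
    have h01 : (SimpleGraph.cycleGraph 6).Adj 0 1 := by decide
    have hno : ∀ u : Fin 6, ¬ ((SimpleGraph.cycleGraph 6).Adj u 3 ∧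
        (SimpleGraph.cycleGraph 6).Adj 0 u) := by decide
    have hadj3 := (pairInit_eq_iff.mp hu3).2.2.1.mp h12
    have hadj0 := (pairInit_eq_iff.mp hu0).2.2.1.mp h01
    exact hno u ⟨hadj3, hadj0⟩
end

section
/- (Theorem 3: local 2-WL has equivalent link discriminating power to 1-WL.) For every label set Σ, all labeled graphs G = (V,E,l) and G' = (V',E',l') over Σ, and all target links (p,q) in G and (p',q') in G': (p,q) and (p',q') are 2-WL_L-indistinguishable if and only if they are 1-WL-indistinguishable. -/
open scoped Classical

universe u v

/-- Recovers the 1-WL colors of both endpoints from the local 2-WL color of a pair. -/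
def WL2Color.toWL1 {σ : Type u} : (t : ℕ) → WL2Color σ t → WL1Color σ t × WL1Color σ t
  | 0 => fun (c : σ × σ × Bool × Bool) => (c.1, c.2.1)
  | t + 1 => fun (c : WL2Color σ t × Multiset (WL2Color σ t) × Multiset (WL2Color σ t)) =>
      (((toWL1 t c.1).1, c.2.2.map fun d => (toWL1 t d).2),
        ((toWL1 t c.1).2, c.2.1.map fun d => (toWL1 t d).1))

/-- Computes the local 2-WL color of a pair from the 1-WL colors of its endpoints and the
indicators of adjacency and equality. -/
def WL1Color.toWL2 {σ : Type u} :
    (t : ℕ) → WL1Color σ t → WL1Color σ t → Bool × Bool → WL2Color σ t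
  | 0 => fun a b f => ((a, b, f) : σ × σ × Bool × Bool)
  | t + 1 => fun (a b : WL1Color σ t × Multiset (WL1Color σ t)) f =>
      (toWL2 t a.1 b.1 f,
        b.2.map fun c => toWL2 t c b.1 (true, false),
        a.2.map fun c => toWL2 t a.1 c (true, false))

theorem toWL1_wl2L {σ : Type u} {V : Type v} [Fintype V] (G : SimpleGraph V) (l : V → σ)
    (t : ℕ) (e : V × V) :
    WL2Color.toWL1 t (wl2L G l t e) = (wl1 G l t e.1, wl1 G l t e.2) := by
  induction t generalizing e with
  | zero => rfl
  | succ t ih =>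
    simp only [wl2L, wl1, WL2Color.toWL1, ih, Multiset.map_map, Function.comp_def,
      SimpleGraph.neighborFinset_eq_filter, G.adj_comm _ e.2]

theorem wl2L_eq_toWL2 {σ : Type u} {V : Type v} [Fintype V] (G : SimpleGraph V) (l : V → σ)
    (t : ℕ) (e : V × V) :
    wl2L G l t e = WL1Color.toWL2 t (wl1 G l t e.1) (wl1 G l t e.2)
      (decide (G.Adj e.1 e.2), decide (e.1 = e.2)) := by
  induction t generalizing e with
  | zero => rfl
  | succ t ih =>
    simp only [wl2L, wl1, WL1Color.toWL2, Multiset.map_map, Function.comp_def,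
      SimpleGraph.neighborFinset_eq_filter]
    refine Prod.ext (ih e) (Prod.ext ?_ ?_)
    · simp only [G.adj_comm _ e.2]
      refine Multiset.map_congr rfl fun u hu => ?_
      have hu : G.Adj u e.2 := by simpa [G.adj_comm u] using hu
      simp [ih, hu, hu.ne]
    · refine Multiset.map_congr rfl fun w hw => ?_
      have hw : G.Adj e.1 w := by simpa using hw
      simp [ih, hw, hw.ne]

/-- Theorem 3: local 2-WL has equivalent link discriminating power to 1-WL. -/
theorem local_wl2_equiv_wl1 :
    ∀ (σ : Type u) (V V' : Type v) [Fintype V] [Fintype V']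
      (G : SimpleGraph V) (l : V → σ) (G' : SimpleGraph V') (l' : V' → σ)
      (e : V × V) (e' : V' × V'),
      IsTargetLink G e → IsTargetLink G' e' →
      (WL2LIndist G l G' l' e e' ↔ WL1Indist G l G' l' e e') := by
  intro σ V V' _ _ G l G' l' e e' he he'
  refine ⟨fun h t => ?_, fun h t => ?_⟩
  · have := congrArg (WL2Color.toWL1 t) (h t)
    rwa [toWL1_wl2L, toWL1_wl2L, Prod.mk.injEq] at this
  · rw [wl2L_eq_toWL2, wl2L_eq_toWL2, (h t).1, (h t).2]
    simp [he.1, he.2, he'.1, he'.2]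
end

section
/- (Theorem 6: incomparability of 1-WL with 0/1 labeling trick and local 2-FWL.) (i) There exist unlabeled graphs G, G' and target links (p,q) in G and (p',q') in G' that are 1-WL-with-0/1-labeling-indistinguishable but not 2-FWL_L-indistinguishable. (ii) There exist unlabeled graphs H, H' and target links (r,s) in H and (r',s') in H' that are 2-FWL_L-indistinguishable but not 1-WL-with-0/1-labeling-indistinguishable. Hence neither test has equal or stronger link discriminating power than the other. -/
open scoped Classical

universe u v

/-- If the neighbour labels of a vertex are determined by its own label, in the same way in two
graphs, then 1-WL refines the labeling of neither. -/
theorem exists_wl1_eq_comp {σ : Type u} {V V' : Type v} [Fintype V] [Fintype V']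
    {G : SimpleGraph V} {l : V → σ} {G' : SimpleGraph V'} {l' : V' → σ} (m : σ → Multiset σ)
    [DecidableRel G.Adj] [DecidableRel G'.Adj]
    (h : ∀ v, (Finset.univ.filter (G.Adj v)).val.map l = m (l v))
    (h' : ∀ v, (Finset.univ.filter (G'.Adj v)).val.map l' = m (l' v)) (t : ℕ) :
    ∃ g : σ → WL1Color σ t, wl1 G l t = g ∘ l ∧ wl1 G' l' t = g ∘ l' := by
  induction t with
  | zero => exact ⟨id, rfl, rfl⟩
  | succ t ih =>
    obtain ⟨g, hg, hg'⟩ := ih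
    refine ⟨fun c => (g c, (m c).map g), ?_, ?_⟩
    · funext v
      change (wl1 G l t v, Multiset.map (wl1 G l t) _) = (g (l v), (m (l v)).map g)
      rw [hg, ← h, Multiset.map_map, Function.comp_apply, SimpleGraph.neighborFinset_eq_filter]
      congr!
    · funext v
      change (wl1 G' l' t v, Multiset.map (wl1 G' l' t) _) = (g (l' v), (m (l' v)).map g)
      rw [hg', ← h', Multiset.map_map, Function.comp_apply, SimpleGraph.neighborFinset_eq_filter]
      congr!

/-- If the initial colors around a pair are determined by its own initial color, then local 2-FWL
does not refine the initial coloring. -/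
theorem exists_fwl2L_eq_comp {σ : Type u} {V : Type v} [Fintype V]
    {G : SimpleGraph V} {l : V → σ} [DecidableRel G.Adj]
    (m : PairColor0 σ → Multiset (PairColor0 σ × PairColor0 σ))
    (h : ∀ e : V × V, (Finset.univ.filter (fun u => G.Adj u e.2 ∨ G.Adj e.1 u)).val.map
      (fun u => (pairInit G l (u, e.2), pairInit G l (e.1, u))) = m (pairInit G l e)) (t : ℕ) :
    ∃ g : PairColor0 σ → FWLColor σ t, fwl2L G l t = g ∘ pairInit G l := by
  induction t with
  | zero => exact ⟨id, rfl⟩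
  | succ t ih =>
    obtain ⟨g, hg⟩ := ih
    refine ⟨fun c => (g c, (m c).map (Prod.map g g)), ?_⟩
    funext e
    change (fwl2L G l t e, Multiset.map (fun u => (fwl2L G l t (u, e.2), fwl2L G l t (e.1, u))) _) =
      (g (pairInit G l e), (m (pairInit G l e)).map (Prod.map g g))
    rw [hg, ← h, Multiset.map_map]
    simp only [Function.comp_def, Prod.map_apply]
    congr!

/-- The disjoint union of the triangles `{0, 1, 2}` and `{3, 4, 5}`. -/
def twoTriangles : SimpleGraph (Fin 6) where
  Adj i j := i ≠ j ∧ i.val / 3 = j.val / 3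
  symm := ⟨by decide⟩
  loopless := ⟨by decide⟩

instance : DecidableRel twoTriangles.Adj := fun i j =>
  inferInstanceAs (Decidable (i ≠ j ∧ i.val / 3 = j.val / 3))

/-- The 6-cycle. -/
def hexagon : SimpleGraph (Fin 6) where
  Adj i j := i = j + 1 ∨ j = i + 1
  symm := ⟨by decide⟩
  loopless := ⟨by decide⟩

instance : DecidableRel hexagon.Adj := fun i j =>
  inferInstanceAs (Decidable (i = j + 1 ∨ j = i + 1))

/-- The element `(a, b)` of `ℤ/4 × ℤ/4` encoded as `b + 4 * a`. -/
def shrikhandeCoord (i : Fin 16) : Fin 4 × Fin 4 :=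
  (finProdFinEquiv (m := 4) (n := 4)).symm i

/-- The Shrikhande graph: the Cayley graph of `ℤ/4 × ℤ/4` with respect to
`±(1,0), ±(0,1), ±(1,1)`. -/
def shrikhande : SimpleGraph (Fin 16) where
  Adj i j := shrikhandeCoord i - shrikhandeCoord j ∈
    [(0, 1), (0, 3), (1, 0), (3, 0), (1, 1), (3, 3)]
  symm := ⟨by decide +kernel⟩
  loopless := ⟨by decide +kernel⟩

instance : DecidableRel shrikhande.Adj := fun i j =>
  inferInstanceAs (Decidable (shrikhandeCoord i - shrikhandeCoord j ∈
    [(0, 1), (0, 3), (1, 0), (3, 0), (1, 1), (3, 3)]))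

/-- The neighbour labels in `twoTriangles` and `hexagon` when `0` and `3` carry label `true`. -/
def antipodalNeighborLabels (c : Unit × Bool) : Multiset (Unit × Bool) :=
  if c.2 then {((), false), ((), false)} else {((), true), ((), false)}

theorem twoTriangles_neighbor_labels (v : Fin 6) :
    (Finset.univ.filter (twoTriangles.Adj v)).val.map (label01 (fun _ => ()) (0, 3)) =
      antipodalNeighborLabels (label01 (fun _ => ()) (0, 3) v) := by
  have key : ∀ v : Fin 6, (Finset.univ.filter (twoTriangles.Adj v)).val.map
      (fun u => ((), decide (u = 0 ∨ u = 3))) =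
      antipodalNeighborLabels ((), decide (v = 0 ∨ v = 3)) := by decide +kernel
  convert key v using 2
  all_goals simp [label01]

theorem hexagon_neighbor_labels (v : Fin 6) :
    (Finset.univ.filter (hexagon.Adj v)).val.map (label01 (fun _ => ()) (0, 3)) =
      antipodalNeighborLabels (label01 (fun _ => ()) (0, 3) v) := by
  have key : ∀ v : Fin 6, (Finset.univ.filter (hexagon.Adj v)).val.map
      (fun u => ((), decide (u = 0 ∨ u = 3))) =
      antipodalNeighborLabels ((), decide (v = 0 ∨ v = 3)) := by decide +kernel
  convert key v using 2
  all_goals simp [label01]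

theorem wl1LabelIndist_twoTriangles_hexagon :
    WL1LabelIndist twoTriangles (fun _ => ()) hexagon (fun _ => ()) (0, 3) (0, 3) := by
  intro t
  obtain ⟨g, hg, hg'⟩ := exists_wl1_eq_comp (σ := Unit × Bool) antipodalNeighborLabels
    twoTriangles_neighbor_labels hexagon_neighbor_labels t
  rw [hg, hg']
  simp [label01]

/-- Equal second-round local 2-FWL colors of `(p, q)` and `(p', q')` force the sizes of
`N(u) ∪ N(q)` to agree, where `u` ranges over `N(p) ∪ N(q)` and is tagged by adjacency to `q`. -/
theorem FWL2LIndist.map_card_eq {σ : Type u} {V V' : Type v} [Fintype V] [Fintype V']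
    {G : SimpleGraph V} {l : V → σ} {G' : SimpleGraph V'} {l' : V' → σ}
    [DecidableRel G.Adj] [DecidableRel G'.Adj] {e : V × V} {e' : V' × V'}
    (h : FWL2LIndist G l G' l' e e') :
    (Finset.univ.filter (fun u => G.Adj u e.2 ∨ G.Adj e.1 u)).val.map (fun u =>
      (decide (G.Adj u e.2), (Finset.univ.filter (fun w => G.Adj w e.2 ∨ G.Adj u w)).card)) =
    (Finset.univ.filter (fun u => G'.Adj u e'.2 ∨ G'.Adj e'.1 u)).val.map (fun u =>
      (decide (G'.Adj u e'.2),
        (Finset.univ.filter (fun w => G'.Adj w e'.2 ∨ G'.Adj u w)).card)) := by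
  have h2 := congrArg (fun c : FWLColor σ 2 => c.2.map (fun x : FWLColor σ 1 × FWLColor σ 1 =>
    (x.1.1.2.2.1, Multiset.card x.1.2))) (h 2)
  simp only [fwl2L, pairInit, Multiset.map_map, Function.comp_def, Multiset.card_map,
    Finset.card_val] at h2
  convert h2

theorem not_fwl2LIndist_twoTriangles_hexagon :
    ¬ FWL2LIndist twoTriangles (fun _ => ()) hexagon (fun _ => ()) (0, 3) (0, 3) := by
  intro h
  have := h.map_card_eq
  revert this
  decide +kernel

/-- The colors around a pair of the Shrikhande graph with a given initial color. -/
def shrikhandePairColors : Unit × Unit × Bool × Bool →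
    Multiset ((Unit × Unit × Bool × Bool) × (Unit × Unit × Bool × Bool)) :=
  let diag : Unit × Unit × Bool × Bool := ((), (), false, true)
  let edge : Unit × Unit × Bool × Bool := ((), (), true, false)
  let nonedge : Unit × Unit × Bool × Bool := ((), (), false, false)
  fun
  | (_, _, _, true) => Multiset.replicate 6 (edge, edge)
  | (_, _, true, false) => {(diag, edge), (edge, diag)} + Multiset.replicate 2 (edge, edge) +
    Multiset.replicate 3 (edge, nonedge) + Multiset.replicate 3 (nonedge, edge)
  | (_, _, false, false) => Multiset.replicate 2 (edge, edge) +
    Multiset.replicate 4 (edge, nonedge) + Multiset.replicate 4 (nonedge, edge)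

set_option synthInstance.maxSize 1024 in
theorem shrikhande_pair_colors (e : Fin 16 × Fin 16) :
    (Finset.univ.filter (fun u => shrikhande.Adj u e.2 ∨ shrikhande.Adj e.1 u)).val.map
      (fun u => (pairInit shrikhande (fun _ => ()) (u, e.2),
        pairInit shrikhande (fun _ => ()) (e.1, u))) =
      shrikhandePairColors (pairInit shrikhande (fun _ => ()) e) := by
  have key : ∀ p q : Fin 16,
      (Finset.univ.filter (fun u => shrikhande.Adj u q ∨ shrikhande.Adj p u)).val.map
        (fun u => (((), (), decide (shrikhande.Adj u q), decide (u = q)),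
          ((), (), decide (shrikhande.Adj p u), decide (p = u)))) =
        shrikhandePairColors ((), (), decide (shrikhande.Adj p q), decide (p = q)) := by
    decide +kernel
  have hinit : ∀ p q : Fin 16, pairInit shrikhande (fun _ => ()) (p, q) =
      (((), (), decide (shrikhande.Adj p q), decide (p = q)) : Unit × Unit × Bool × Bool) := by
    intro p q
    refine Prod.ext rfl (Prod.ext rfl (Prod.ext ?_ ?_)) <;> simp [pairInit]
  obtain ⟨p, q⟩ := e
  simp only [hinit]
  exact key p q

theorem fwl2LIndist_shrikhande :
    FWL2LIndist shrikhande (fun _ => ()) shrikhande (fun _ => ()) (0, 8) (0, 6) := by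
  intro t
  obtain ⟨g, hg⟩ := exists_fwl2L_eq_comp (σ := Unit) shrikhandePairColors shrikhande_pair_colors t
  have h8 : ¬ shrikhande.Adj 0 8 := by decide +kernel
  have h6 : ¬ shrikhande.Adj 0 6 := by decide +kernel
  simp [hg, pairInit, h8, h6]

/-- Equal third-round 1-WL colors force agreement, over the neighbours `u`, of the number of
`P`-labeled neighbours of `u` paired with those numbers for the neighbours of `u`. -/
theorem map_card_eq_of_wl1_eq {σ : Type u} {V V' : Type v} [Fintype V] [Fintype V']
    {G : SimpleGraph V} {l : V → σ} {G' : SimpleGraph V'} {l' : V' → σ}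
    [DecidableRel G.Adj] [DecidableRel G'.Adj] (P : σ → Prop) [DecidablePred P] {v : V} {v' : V'}
    (h : wl1 G l 3 v = wl1 G' l' 3 v') :
    (Finset.univ.filter (G.Adj v)).val.map (fun u =>
      (((Finset.univ.filter (G.Adj u)).val.map l).countP P,
        (Finset.univ.filter (G.Adj u)).val.map (fun w =>
          ((Finset.univ.filter (G.Adj w)).val.map l).countP P))) =
    (Finset.univ.filter (G'.Adj v')).val.map (fun u =>
      (((Finset.univ.filter (G'.Adj u)).val.map l').countP P,
        (Finset.univ.filter (G'.Adj u)).val.map (fun w =>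
          ((Finset.univ.filter (G'.Adj w)).val.map l').countP P))) := by
  have h3 := congrArg (fun c : WL1Color σ 3 => c.2.map (fun x : WL1Color σ 2 =>
    (Multiset.countP P x.1.2, x.2.map (fun y : WL1Color σ 1 => Multiset.countP P y.2)))) h
  dsimp only [wl1, WL1Color] at h3
  simp only [Multiset.map_map, Function.comp_def,
    SimpleGraph.neighborFinset_eq_filter] at h3
  convert h3

theorem not_wl1LabelIndist_shrikhande :
    ¬ WL1LabelIndist shrikhande (fun _ => ()) shrikhande (fun _ => ()) (0, 8) (0, 6) := by
  intro h
  have hlabel : ∀ e : Fin 16 × Fin 16, label01 (fun _ => ()) e =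
      fun v => ((), decide (v = e.1 ∨ v = e.2)) := by
    intro e
    funext v
    simp [label01]
  have := map_card_eq_of_wl1_eq (fun c : Unit × Bool => c.2 = true) (h 3).1
  rw [hlabel, hlabel] at this
  revert this
  decide +kernel

/-- Theorem 6: 1-WL with 0/1 labeling trick and local 2-FWL are incomparable. -/
theorem labeling_trick_incomparable_local_fwl2 :
    (∃ (n n' : ℕ) (G : SimpleGraph (Fin n)) (G' : SimpleGraph (Fin n'))
        (e : Fin n × Fin n) (e' : Fin n' × Fin n'),
        IsTargetLink G e ∧ IsTargetLink G' e' ∧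
        WL1LabelIndist G (fun _ => ()) G' (fun _ => ()) e e' ∧
        ¬ FWL2LIndist G (fun _ => ()) G' (fun _ => ()) e e') ∧
    (∃ (m m' : ℕ) (H : SimpleGraph (Fin m)) (H' : SimpleGraph (Fin m'))
        (f : Fin m × Fin m) (f' : Fin m' × Fin m'),
        IsTargetLink H f ∧ IsTargetLink H' f' ∧
        FWL2LIndist H (fun _ => ()) H' (fun _ => ()) f f' ∧
        ¬ WL1LabelIndist H (fun _ => ()) H' (fun _ => ()) f f') := by
  exact ⟨⟨6, 6, twoTriangles, hexagon, (0, 3), (0, 3), ⟨by decide, by decide⟩,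
      ⟨by decide, by decide⟩, wl1LabelIndist_twoTriangles_hexagon,
      not_fwl2LIndist_twoTriangles_hexagon⟩,
    ⟨16, 16, shrikhande, shrikhande, (0, 8), (0, 6), ⟨by decide, by decide +kernel⟩,
      ⟨by decide, by decide +kernel⟩, fwl2LIndist_shrikhande, not_wl1LabelIndist_shrikhande⟩⟩
end

section
/- (Per-iteration refinement of 2-WL by 2-FWL, the inductive claim in the proof of Theorem 2.) For every label set Σ, all labeled graphs G = (V,E,l) and G' = (V',E',l') over Σ, all ordered pairs (p,q) ∈ V × V and (p',q') ∈ V' × V', and every iteration t ≥ 0: if the 2-FWL colors satisfy c_Fᵗ(p,q) = c_Fᵗ(p',q'), then the 2-WL colors satisfy c₂ᵗ(p,q) = c₂ᵗ(p',q'). -/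
open scoped Classical

universe u v

/-- The 2-WL color of a pair read off from its 2-FWL color at the same iteration. -/
def FWLColor.toWL2Color {σ : Type u} : (t : ℕ) → FWLColor σ t → WL2Color σ t
  | 0 => fun c => c
  | t + 1 => fun c =>
      (toWL2Color t c.1, c.2.map (fun x => toWL2Color t x.1),
        c.2.map (fun x => toWL2Color t x.2))

theorem FWLColor.toWL2Color_fwl2 {σ : Type u} {V : Type v} [Fintype V] (G : SimpleGraph V)
    (l : V → σ) (t : ℕ) (e : V × V) :
    FWLColor.toWL2Color t (fwl2 G l t e) = wl2 G l t e := by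
  induction t generalizing e with
  | zero => rfl
  | succ t ih =>
    simp only [FWLColor.toWL2Color, fwl2, wl2, Multiset.map_map, Function.comp_def, ih]
    rfl

/-- Per-iteration refinement of 2-WL by 2-FWL (inductive claim in the proof of Theorem 2). -/
theorem fwl2_refines_wl2_per_iteration :
    ∀ (σ : Type u) (V V' : Type v) [Fintype V] [Fintype V']
      (G : SimpleGraph V) (l : V → σ) (G' : SimpleGraph V') (l' : V' → σ)
      (e : V × V) (e' : V' × V') (t : ℕ),
      fwl2 G l t e = fwl2 G' l' t e' → wl2 G l t e = wl2 G' l' t e' := by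
  intro σ V V' _ _ G l G' l' e e' t h
  rw [← FWLColor.toWL2Color_fwl2, h, FWLColor.toWL2Color_fwl2]
end

section
/- (2-WL refines local 2-WL, used to derive Theorem 1 from Theorem 3.) For every label set Σ, all labeled graphs G = (V,E,l) and G' = (V',E',l') over Σ, and all ordered pairs (p,q) ∈ V × V and (p',q') ∈ V' × V': if (p,q) and (p',q') are 2-WL-indistinguishable, then they are 2-WL_L-indistinguishable. Equivalently, whenever local 2-WL can discriminate two links, 2-WL can also discriminate them. -/
open scoped Classical

universe u v

/-- The adjacency bit of the initial pair color recorded in a 2-WL color. -/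
def WL2Color.adjBit {σ : Type u} : (t : ℕ) → WL2Color σ t → Bool
  | 0, c => c.2.2.1
  | t + 1, c => WL2Color.adjBit t c.1

/-- Recovers the local 2-WL color of a pair from its 2-WL color, by discarding the colors of
non-adjacent pairs at every level. -/
def WL2Color.localize {σ : Type u} : (t : ℕ) → WL2Color σ t → WL2Color σ t
  | 0, c => c
  | t + 1, c =>
      (WL2Color.localize t c.1,
        (c.2.1.filter fun d => WL2Color.adjBit t d = true).map (WL2Color.localize t),
        (c.2.2.filter fun d => WL2Color.adjBit t d = true).map (WL2Color.localize t))

theorem adjBit_wl2 {σ : Type u} {V : Type v} [Fintype V] (G : SimpleGraph V) (l : V → σ)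
    (t : ℕ) (e : V × V) : (wl2 G l t e).adjBit t = decide (G.Adj e.1 e.2) := by
  induction t with
  | zero => rfl
  | succ t ih => exact ih

theorem localize_wl2 {σ : Type u} {V : Type v} [Fintype V] (G : SimpleGraph V) (l : V → σ)
    (t : ℕ) (e : V × V) : (wl2 G l t e).localize t = wl2L G l t e := by
  induction t generalizing e with
  | zero => rfl
  | succ t ih =>
    simp only [wl2, wl2L, WL2Color.localize, Multiset.filter_map, Multiset.map_map,
      Function.comp_def, adjBit_wl2, ih, decide_eq_true_eq, Finset.filter_val]
    congr!

/-- 2-WL refines local 2-WL. -/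
theorem wl2_refines_local_wl2 :
    ∀ (σ : Type u) (V V' : Type v) [Fintype V] [Fintype V']
      (G : SimpleGraph V) (l : V → σ) (G' : SimpleGraph V') (l' : V' → σ)
      (e : V × V) (e' : V' × V'),
      WL2Indist G l G' l' e e' → WL2LIndist G l G' l' e e' := by
  intro σ V V' _ _ G l G' l' e e' h t
  rw [← localize_wl2, ← localize_wl2, h t]
end

section
/- (2-FWL refines local 2-FWL, since 2-FWL's global neighborhood is a superset of that of 2-FWL_L.) For every label set Σ, all labeled graphs G = (V,E,l) and G' = (V',E',l') over Σ, and all ordered pairs (p,q) ∈ V × V and (p',q') ∈ V' × V': if (p,q) and (p',q') are 2-FWL-indistinguishable, then they are 2-FWL_L-indistinguishable. Equivalently, whenever local 2-FWL can discriminate two links, 2-FWL can also discriminate them. -/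
open scoped Classical

universe u v

/-- The adjacency bit of the initial color recorded in a 2-FWL color. -/
def FWLColor.adj {σ : Type u} : (t : ℕ) → FWLColor σ t → Bool
  | 0 => fun c => c.2.2.1
  | t + 1 => fun c => FWLColor.adj t c.1

/-- The local 2-FWL color determined by a 2-FWL color: at each round, discard the pairs of
colors neither of which belongs to an edge. -/
def FWLColor.toLocal {σ : Type u} : (t : ℕ) → FWLColor σ t → FWLColor σ t
  | 0 => id
  | t + 1 => fun c =>
      (FWLColor.toLocal t c.1,
        (c.2.filter (fun x => FWLColor.adj t x.1 = true ∨ FWLColor.adj t x.2 = true)).map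
          (Prod.map (FWLColor.toLocal t) (FWLColor.toLocal t)))

theorem FWLColor.adj_fwl2 {σ : Type u} {V : Type v} [Fintype V] (G : SimpleGraph V)
    (l : V → σ) (t : ℕ) (e : V × V) :
    FWLColor.adj t (fwl2 G l t e) = true ↔ G.Adj e.1 e.2 := by
  induction t with
  | zero => simp [FWLColor.adj, fwl2, pairInit]
  | succ t ih => exact ih

theorem FWLColor.toLocal_fwl2 {σ : Type u} {V : Type v} [Fintype V] (G : SimpleGraph V)
    (l : V → σ) (t : ℕ) (e : V × V) :
    FWLColor.toLocal t (fwl2 G l t e) = fwl2L G l t e := by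
  induction t generalizing e with
  | zero => rfl
  | succ t ih =>
    simp [FWLColor.toLocal, fwl2, fwl2L, ih, Multiset.filter_map, FWLColor.adj_fwl2]
    congr!

/-- 2-FWL refines local 2-FWL. -/
theorem fwl2_refines_local_fwl2 :
    ∀ (σ : Type u) (V V' : Type v) [Fintype V] [Fintype V']
      (G : SimpleGraph V) (l : V → σ) (G' : SimpleGraph V') (l' : V' → σ)
      (e : V × V) (e' : V' × V'),
      FWL2Indist G l G' l' e e' → FWL2LIndist G l G' l' e e' := by
  intro σ V V' _ _ G l G' l' e e' h t
  rw [← FWLColor.toLocal_fwl2, ← FWLColor.toLocal_fwl2, h t]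
end

section
/- (Simulation direction of Theorem 4.) For every label set Σ, all labeled graphs G = (V,E,l) and G' = (V',E',l') over Σ, and all ordered pairs (p,q) ∈ V × V and (p',q') ∈ V' × V': if (p,q) and (p',q') are 2-FWL_L-indistinguishable, then they are 2-WL_L-indistinguishable. -/
open scoped Classical

universe u v

namespace FWLColor

/-- The initial pair color recorded in a 2-FWL color. -/
def initialColor {σ : Type u} : (t : ℕ) → FWLColor σ t → PairColor0 σ
  | 0 => fun c => c
  | t + 1 => fun c => initialColor t c.1

/-- Whether a 2-FWL color is that of an adjacent pair. -/
def isEdge {σ : Type u} (t : ℕ) (c : FWLColor σ t) : Bool := (initialColor t c).2.2.1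

/-- The local 2-WL color determined by a local 2-FWL color. -/
def toWL2 {σ : Type u} : (t : ℕ) → FWLColor σ t → WL2Color σ t
  | 0 => fun c => c
  | t + 1 => fun c =>
      (toWL2 t c.1,
        (c.2.filter (fun x => isEdge t x.1 = true)).map (fun x => toWL2 t x.1),
        (c.2.filter (fun x => isEdge t x.2 = true)).map (fun x => toWL2 t x.2))

end FWLColor

section

variable {σ : Type u} {V : Type v} [Fintype V] (G : SimpleGraph V) (l : V → σ)

theorem initialColor_fwl2L (t : ℕ) (e : V × V) : (fwl2L G l t e).initialColor t = pairInit G l e := by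
  induction t with
  | zero => rfl
  | succ t ih => exact ih

theorem isEdge_fwl2L (t : ℕ) (e : V × V) :
    (fwl2L G l t e).isEdge t = true ↔ G.Adj e.1 e.2 := by
  rw [FWLColor.isEdge, initialColor_fwl2L]
  exact decide_eq_true_iff

theorem toWL2_fwl2L (t : ℕ) (e : V × V) : (fwl2L G l t e).toWL2 t = wl2L G l t e := by
  induction t generalizing e with
  | zero => rfl
  | succ t ih =>
    have absorb_left (a b : Prop) : (a ∧ (a ∨ b)) = a := propext (by tauto)
    have absorb_right (a b : Prop) : (b ∧ (a ∨ b)) = b := propext (by tauto)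
    simp only [fwl2L, FWLColor.toWL2, wl2L, Multiset.filter_map, Multiset.map_map,
      Function.comp_def, isEdge_fwl2L, ih, Finset.filter_val, Multiset.filter_filter,
      absorb_left, absorb_right]
    rfl

end

/-- Simulation direction of Theorem 4: local 2-FWL refines local 2-WL. -/
theorem local_fwl2_refines_local_wl2 :
    ∀ (σ : Type u) (V V' : Type v) [Fintype V] [Fintype V']
      (G : SimpleGraph V) (l : V → σ) (G' : SimpleGraph V') (l' : V' → σ)
      (e : V × V) (e' : V' × V'),
      FWL2LIndist G l G' l' e e' → WL2LIndist G l G' l' e e' := by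
  intro σ V V' _ _ G l G' l' e e' h t
  rw [← toWL2_fwl2L, ← toWL2_fwl2L, h t]
end

section
/- (Table 1 entry: 2-FWL has stronger link discriminating power than local 2-FWL.) (i) For every label set Σ, all labeled graphs G = (V,E,l) and G' = (V',E',l') over Σ, and all target links (p,q) in G and (p',q') in G': if (p,q) and (p',q') are 2-FWL-indistinguishable, then they are 2-FWL_L-indistinguishable. (ii) There exist unlabeled graphs G, G' and target links (p,q) in G and (p',q') in G' that are 2-FWL_L-indistinguishable but not 2-FWL-indistinguishable. -/
open scoped Classical

universe u v

theorem pairInit_eq_of_fwl2_eq {σ : Type u} {V V' : Type v} [Fintype V] [Fintype V']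
    {G : SimpleGraph V} {l : V → σ} {G' : SimpleGraph V'} {l' : V' → σ}
    {t : ℕ} {e : V × V} {e' : V' × V'} (h : fwl2 G l t e = fwl2 G' l' t e') :
    pairInit G l e = pairInit G' l' e' := by
  induction t with
  | zero => exact h
  | succ t ih => exact ih (congrArg Prod.fst h)

theorem adj_iff_of_fwl2_eq {σ : Type u} {V V' : Type v} [Fintype V] [Fintype V']
    {G : SimpleGraph V} {l : V → σ} {G' : SimpleGraph V'} {l' : V' → σ}
    {t : ℕ} {e : V × V} {e' : V' × V'} (h : fwl2 G l t e = fwl2 G' l' t e') :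
    G.Adj e.1 e.2 ↔ G'.Adj e'.1 e'.2 :=
  decide_eq_decide.mp
    (congrArg (fun c : σ × σ × Bool × Bool => c.2.2.1) (pairInit_eq_of_fwl2_eq h))

/-- Multisets of values over two finite types agree only if a bijection matches the values. -/
theorem exists_equiv_of_map_univ_eq {α β γ : Type*} [Fintype α] [Fintype β]
    {f : α → γ} {g : β → γ}
    (h : (Finset.univ : Finset α).val.map f = (Finset.univ : Finset β).val.map g) :
    ∃ φ : α ≃ β, ∀ a, f a = g (φ a) := by
  have hfiber (c : γ) : Fintype.card {a // f a = c} = Fintype.card {b // g b = c} := by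
    have hc := congrArg (Multiset.count c) h
    rw [Multiset.count_map, Multiset.count_map] at hc
    simpa only [Fintype.card_subtype, Finset.card_def, Finset.filter_val, eq_comm] using hc
  let φ := Equiv.ofFiberEquiv fun c => Fintype.equivOfCardEq (hfiber c)
  exact ⟨φ, fun a => (Equiv.ofFiberEquiv_map _ a).symm⟩

theorem fwl2L_eq_of_fwl2_eq {σ : Type u} {V V' : Type v} [Fintype V] [Fintype V']
    {G : SimpleGraph V} {l : V → σ} {G' : SimpleGraph V'} {l' : V' → σ}
    {t : ℕ} {e : V × V} {e' : V' × V'} (h : fwl2 G l t e = fwl2 G' l' t e') :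
    fwl2L G l t e = fwl2L G' l' t e' := by
  induction t generalizing e e' with
  | zero => exact h
  | succ t ih =>
    obtain ⟨φ, hφ⟩ := exists_equiv_of_map_univ_eq (congrArg Prod.snd h)
    have hleft u : fwl2 G l t (u, e.2) = fwl2 G' l' t (φ u, e'.2) := congrArg Prod.fst (hφ u)
    have hright u : fwl2 G l t (e.1, u) = fwl2 G' l' t (e'.1, φ u) := congrArg Prod.snd (hφ u)
    have hfilter : Finset.univ.filter (fun u => G'.Adj u e'.2 ∨ G'.Adj e'.1 u) =
        (Finset.univ.filter (fun u => G.Adj u e.2 ∨ G.Adj e.1 u)).map φ.toEmbedding := by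
      ext w
      obtain ⟨u, rfl⟩ := φ.surjective w
      have hl := adj_iff_of_fwl2_eq (hleft u)
      have hr := adj_iff_of_fwl2_eq (hright u)
      simp_all
    refine Prod.ext (ih (congrArg Prod.fst h)) ?_
    simp only [fwl2L]
    rw [hfilter, Finset.map_val, Multiset.map_map]
    exact Multiset.map_congr rfl fun u _ => Prod.ext (ih (hleft u)) (ih (hright u))

/-- In edgeless graphs, local 2-FWL never refines the initial pair coloring. -/
theorem fwl2L_bot_eq {σ : Type u} {V V' : Type v} [Fintype V] [Fintype V']
    {l : V → σ} {l' : V' → σ} {e : V × V} {e' : V' × V'}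
    (h : pairInit ⊥ l e = pairInit ⊥ l' e') (t : ℕ) :
    fwl2L ⊥ l t e = fwl2L ⊥ l' t e' := by
  induction t with
  | zero => exact h
  | succ t ih => exact Prod.ext ih (by simp [fwl2L])

/-- Table 1 entry: 2-FWL has stronger link discriminating power than local 2-FWL. -/
theorem fwl2_stronger_than_local_fwl2 :
    (∀ (σ : Type u) (V V' : Type v) [Fintype V] [Fintype V']
        (G : SimpleGraph V) (l : V → σ) (G' : SimpleGraph V') (l' : V' → σ)
        (e : V × V) (e' : V' × V'),
        IsTargetLink G e → IsTargetLink G' e' →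
        FWL2Indist G l G' l' e e' → FWL2LIndist G l G' l' e e') ∧
    (∃ (n n' : ℕ) (G : SimpleGraph (Fin n)) (G' : SimpleGraph (Fin n'))
        (e : Fin n × Fin n) (e' : Fin n' × Fin n'),
        IsTargetLink G e ∧ IsTargetLink G' e' ∧
        FWL2LIndist G (fun _ => ()) G' (fun _ => ()) e e' ∧
        ¬ FWL2Indist G (fun _ => ()) G' (fun _ => ()) e e') := by
  refine ⟨fun σ V V' _ _ G l G' l' e e' _ _ h t => fwl2L_eq_of_fwl2_eq (h t),
    2, 3, ⊥, ⊥, (0, 1), (0, 1), by simp [IsTargetLink], by simp [IsTargetLink],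
    fwl2L_bot_eq (by simp [pairInit]; rfl), fun h => ?_⟩
  have hcard := congrArg Multiset.card (congrArg Prod.snd (h 1))
  simp [fwl2] at hcard
end

section
/- (2-FWL can count common neighbors.) For every label set Σ, all labeled graphs G = (V,E,l) and G' = (V',E',l') over Σ, and all ordered pairs (p,q) ∈ V × V and (p',q') ∈ V' × V': if the 2-FWL colors at iteration 1 agree, i.e. c_F¹(p,q) = c_F¹(p',q'), then the number of common neighbors of p and q in G equals the number of common neighbors of p' and q' in G', i.e. |N(p) ∩ N(q)| = |N(p') ∩ N(q')|. In particular, 2-FWL-indistinguishable links have equal numbers of common neighbors. -/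
open scoped Classical

universe u v

/-- The number of common neighbors can be read off the 2-FWL color at iteration 1. -/
theorem commonNbrCount_eq_countP_fwl2 {σ : Type u} {V : Type v} [Fintype V]
    (G : SimpleGraph V) (l : V → σ) (e : V × V) :
    commonNbrCount G e =
      (show Multiset (PairColor0 σ × PairColor0 σ) from (fwl2 G l 1 e).2).countP
        (fun c => c.1.2.2.1 = true ∧ c.2.2.2.1 = true) := by
  change _ = Multiset.countP _
    (Finset.univ.val.map (fun u => (pairInit G l (u, e.2), pairInit G l (e.1, u))))
  rw [Multiset.countP_map, ← Finset.filter_val, Finset.card_val, commonNbrCount]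
  congr 1
  ext u
  simp [pairInit, and_comm, G.adj_comm u e.2]

/-- 2-FWL can count common neighbors: agreement of 2-FWL colors at iteration 1 forces
equal numbers of common neighbors. -/
theorem fwl2_counts_common_neighbors :
    ∀ (σ : Type u) (V V' : Type v) [Fintype V] [Fintype V']
      (G : SimpleGraph V) (l : V → σ) (G' : SimpleGraph V') (l' : V' → σ)
      (e : V × V) (e' : V' × V'),
      fwl2 G l 1 e = fwl2 G' l' 1 e' →
      commonNbrCount G e = commonNbrCount G' e' := by
  intro σ V V' _ _ G l G' l' e e' h
  rw [commonNbrCount_eq_countP_fwl2 G l, commonNbrCount_eq_countP_fwl2 G' l', h]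
end

section
/- (Local 2-FWL can count common neighbors.) For every label set Σ, all labeled graphs G = (V,E,l) and G' = (V',E',l') over Σ, and all ordered pairs (p,q) ∈ V × V and (p',q') ∈ V' × V': if the local 2-FWL colors at iteration 1 agree, i.e. c_FL¹(p,q) = c_FL¹(p',q'), then the number of common neighbors of p and q in G equals the number of common neighbors of p' and q' in G', i.e. |N(p) ∩ N(q)| = |N(p') ∩ N(q')|. In particular, 2-FWL_L-indistinguishable links have equal numbers of common neighbors. -/
open scoped Classical

universe u v

/-- Both components of a pair of initial colors record an edge. -/
def BothEdges {σ : Type u} (c : PairColor0 σ × PairColor0 σ) : Prop :=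
  c.1.2.2.1 = true ∧ c.2.2.2.1 = true

/-- The number of common neighbors is read off the multiset in the first local 2-FWL color. -/
lemma commonNbrCount_eq_countP_fwl2L {σ : Type u} {V : Type v} [Fintype V]
    (G : SimpleGraph V) (l : V → σ) (e : V × V) :
    commonNbrCount G e = Multiset.countP BothEdges (fwl2L G l 1 e).2 := by
  change _ = Multiset.countP BothEdges
    ((Finset.univ.filter (fun u => G.Adj u e.2 ∨ G.Adj e.1 u)).val.map
      (fun u => (pairInit G l (u, e.2), pairInit G l (e.1, u))))
  rw [Multiset.countP_map, ← Finset.filter_val, Finset.card_val, commonNbrCount]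
  congr 1
  ext u
  simp only [Finset.mem_inter, SimpleGraph.mem_neighborFinset, Finset.mem_filter,
    Finset.mem_univ, true_and, BothEdges, pairInit, decide_eq_true_eq, G.adj_comm e.2 u]
  tauto

/-- Local 2-FWL can count common neighbors: agreement of local 2-FWL colors at iteration 1
forces equal numbers of common neighbors. -/
theorem local_fwl2_counts_common_neighbors :
    ∀ (σ : Type u) (V V' : Type v) [Fintype V] [Fintype V']
      (G : SimpleGraph V) (l : V → σ) (G' : SimpleGraph V') (l' : V' → σ)
      (e : V × V) (e' : V' × V'),
      fwl2L G l 1 e = fwl2L G' l' 1 e' →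
      commonNbrCount G e = commonNbrCount G' e' := by
  intro σ V V' _ _ G l G' l' e e' h
  rw [commonNbrCount_eq_countP_fwl2L G l, commonNbrCount_eq_countP_fwl2L G' l', h]
end
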